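/- Let (H, β) be a monoidal Hom-Hopf algebra. (1) If σ is a normal left monoidal Hom-2-cocycle on H, then the comultiplication Δ of H is an algebra homomorphism from the left twist _σH to _σH ⊗ H, and makes _σH a right (H, β)-Hom-comodule algebra. (2) If σ is a normal right monoidal Hom-2-cocycle on H, then Δ is an algebra homomorphism from the right twist H_σ to H ⊗ H_σ, and makes H_σ a left (H, β)-Hom-comodule algebra. -/

import Mathlib

open TensorProduct

/-! Basic notions of monoidal Hom-algebras, Hom-coalgebras, Hom-bialgebras and
Hom-Hopf algebras over a field `k`, following Caenepeel–Goyvaerts.  All Sweedler-type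
identities are expressed via the tensor-product calculus of Mathlib. -/

/-- A (unital) monoidal Hom-associative algebra `(A, α)`. -/
structure HomAlg (k : Type*) [Field k] (A : Type*) [AddCommGroup A] [Module k A] where
  mul : A →ₗ[k] A →ₗ[k] A
  one : A
  str : A ≃ₗ[k] A
  hom_assoc : ∀ a b c, mul (str a) (mul b c) = mul (mul a b) (str c)
  mul_one : ∀ a, mul a one = str a
  one_mul : ∀ a, mul one a = str a
  str_mul : ∀ a b, str (mul a b) = mul (str a) (str b)
  str_one : str one = one

/-- A (counital) monoidal Hom-coassociative coalgebra `(C, λ)`. -/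
structure HomCoalg (k : Type*) [Field k] (C : Type*) [AddCommGroup C] [Module k C] where
  comul : C →ₗ[k] C ⊗[k] C
  counit : C →ₗ[k] k
  str : C ≃ₗ[k] C
  hom_coassoc : ∀ c,
    TensorProduct.map str.symm.toLinearMap comul (comul c)
      = TensorProduct.assoc k C C C (TensorProduct.map comul str.symm.toLinearMap (comul c))
  counit_comul_right : ∀ c,
    TensorProduct.rid k C (TensorProduct.map LinearMap.id counit (comul c)) = str.symm c
  counit_comul_left : ∀ c,
    TensorProduct.lid k C (TensorProduct.map counit LinearMap.id (comul c)) = str.symm c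
  comul_str : ∀ c, comul (str c) = TensorProduct.map str.toLinearMap str.toLinearMap (comul c)
  counit_str : ∀ c, counit (str c) = counit c

/-- A monoidal Hom-bialgebra `(H, β)`. -/
structure HomBialg (k : Type*) [Field k] (H : Type*) [AddCommGroup H] [Module k H]
    extends HomAlg k H, HomCoalg k H where
  comul_mul : ∀ a b,
    comul (mul a b)
      = TensorProduct.map (TensorProduct.lift mul) (TensorProduct.lift mul)
          (TensorProduct.tensorTensorTensorComm k H H H H (comul a ⊗ₜ[k] comul b))
  comul_one : comul one = one ⊗ₜ[k] one
  counit_mul : ∀ a b, counit (mul a b) = counit a * counit b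
  counit_one : counit one = 1

/-- A monoidal Hom-Hopf algebra `(H, β, S)`. -/
structure HomHopf (k : Type*) [Field k] (H : Type*) [AddCommGroup H] [Module k H]
    extends HomBialg k H where
  S : H →ₗ[k] H
  S_str : ∀ h, str (S h) = S (str h)
  S_mul_left : ∀ h,
    TensorProduct.lift mul (TensorProduct.map S LinearMap.id (comul h)) = counit h • one
  S_mul_right : ∀ h,
    TensorProduct.lift mul (TensorProduct.map LinearMap.id S (comul h)) = counit h • one

section HomDefs

variable {k : Type*} [Field k] {A H M C T : Type*}
  [AddCommGroup A] [Module k A] [AddCommGroup H] [Module k H]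
  [AddCommGroup M] [Module k M] [AddCommGroup C] [Module k C]
  [AddCommGroup T] [Module k T]

/-- `(M, μ)` is a right `(A, α)`-Hom-module via `act`. -/
def IsRightHomModule (AA : HomAlg k A) (μ : M ≃ₗ[k] M) (act : M →ₗ[k] A →ₗ[k] M) : Prop :=
  (∀ m a b, act (act m a) (AA.str b) = act (μ m) (AA.mul a b)) ∧
  (∀ m, act m AA.one = μ m) ∧
  (∀ m a, μ (act m a) = act (μ m) (AA.str a))

/-- The monoidal Hom-algebra `(HM, β)` is a right `(A, α)`-Hom-module algebra via `act`. -/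
def IsRightHomModuleAlg (AA : HomBialg k A) (HM : HomAlg k H)
    (act : H →ₗ[k] A →ₗ[k] H) : Prop :=
  IsRightHomModule AA.toHomAlg HM.str act ∧
  (∀ h g a, act (HM.mul h g) a
      = TensorProduct.lift HM.mul (TensorProduct.map (act h) (act g) (AA.comul a))) ∧
  (∀ a, act HM.one a = AA.counit a • HM.one)

/-- `(M, μ)` is a left `(H, β)`-Hom-module via `act`. -/
def IsLeftHomModule (HHa : HomAlg k H) (μ : M ≃ₗ[k] M) (act : H →ₗ[k] M →ₗ[k] M) : Prop :=
  (∀ h g m, act (HHa.str h) (act g m) = act (HHa.mul h g) (μ m)) ∧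
  (∀ m, act HHa.one m = μ m) ∧
  (∀ h m, μ (act h m) = act (HHa.str h) (μ m))

/-- The monoidal Hom-algebra `(AM, α)` is a left `(H, β)`-Hom-module algebra via `act`. -/
def IsLeftHomModuleAlg (HB : HomBialg k H) (AM : HomAlg k A)
    (act : H →ₗ[k] A →ₗ[k] A) : Prop :=
  IsLeftHomModule HB.toHomAlg AM.str act ∧
  (∀ h a b, act h (AM.mul a b)
      = TensorProduct.lift AM.mul
          (TensorProduct.map (act.flip a) (act.flip b) (HB.comul h))) ∧
  (∀ h, act h AM.one = HB.counit h • AM.one)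

/-- `(M, μ)` is a left `(H, β)`-Hom-comodule via `ρ`. -/
def IsLeftHomComodule (HC : HomCoalg k H) (μ : M ≃ₗ[k] M) (ρ : M →ₗ[k] H ⊗[k] M) : Prop :=
  (∀ m, TensorProduct.map HC.str.symm.toLinearMap ρ (ρ m)
      = TensorProduct.assoc k H H M
          (TensorProduct.map HC.comul μ.symm.toLinearMap (ρ m))) ∧
  (∀ m, ρ (μ m) = TensorProduct.map HC.str.toLinearMap μ.toLinearMap (ρ m)) ∧
  (∀ m, TensorProduct.lid k M (TensorProduct.map HC.counit LinearMap.id (ρ m)) = μ.symm m)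

/-- The monoidal Hom-coalgebra `(CC, λ)` is a left `(H, β)`-Hom-comodule coalgebra via `ρ`. -/
def IsLeftHomComoduleCoalg (HB : HomBialg k H) (CC : HomCoalg k C)
    (ρ : C →ₗ[k] H ⊗[k] C) : Prop :=
  IsLeftHomComodule HB.toHomCoalg CC.str ρ ∧
  (∀ c, TensorProduct.map LinearMap.id CC.comul (ρ c)
      = TensorProduct.map (TensorProduct.lift HB.mul) LinearMap.id
          (TensorProduct.tensorTensorTensorComm k H C H C
            (TensorProduct.map ρ ρ (CC.comul c)))) ∧
  (∀ c, TensorProduct.rid k H (TensorProduct.map LinearMap.id CC.counit (ρ c))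
      = CC.counit c • HB.one)

/-- The monoidal Hom-algebra `(AM, α)` is a left `(H, β)`-Hom-comodule algebra via `ρ`. -/
def IsLeftHomComoduleAlg (HB : HomBialg k H) (AM : HomAlg k A)
    (ρ : A →ₗ[k] H ⊗[k] A) : Prop :=
  IsLeftHomComodule HB.toHomCoalg AM.str ρ ∧
  (∀ a b, ρ (AM.mul a b)
      = TensorProduct.map (TensorProduct.lift HB.mul) (TensorProduct.lift AM.mul)
          (TensorProduct.tensorTensorTensorComm k H A H A (ρ a ⊗ₜ[k] ρ b))) ∧
  ρ AM.one = HB.one ⊗ₜ[k] AM.one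

/-- `(M, μ)` is a right `(C, λ)`-Hom-comodule via `ρ`. -/
def IsRightHomComodule (CC : HomCoalg k C) (μ : M ≃ₗ[k] M) (ρ : M →ₗ[k] M ⊗[k] C) : Prop :=
  (∀ m, TensorProduct.map μ.symm.toLinearMap CC.comul (ρ m)
      = TensorProduct.assoc k M C C
          (TensorProduct.map ρ CC.str.symm.toLinearMap (ρ m))) ∧
  (∀ m, ρ (μ m) = TensorProduct.map μ.toLinearMap CC.str.toLinearMap (ρ m)) ∧
  (∀ m, TensorProduct.rid k M (TensorProduct.map LinearMap.id CC.counit (ρ m)) = μ.symm m)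

/-- The monoidal Hom-coalgebra `(CC, λ)` is a right `(A, α)`-Hom-comodule coalgebra via `ρ`. -/
def IsRightHomComoduleCoalg (AB : HomBialg k A) (CC : HomCoalg k C)
    (ρ : C →ₗ[k] C ⊗[k] A) : Prop :=
  IsRightHomComodule AB.toHomCoalg CC.str ρ ∧
  (∀ c, TensorProduct.map CC.comul LinearMap.id (ρ c)
      = TensorProduct.map LinearMap.id (TensorProduct.lift AB.mul)
          (TensorProduct.tensorTensorTensorComm k C A C A
            (TensorProduct.map ρ ρ (CC.comul c)))) ∧
  (∀ c, TensorProduct.lid k A (TensorProduct.map CC.counit LinearMap.id (ρ c))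
      = CC.counit c • AB.one)

/-- The monoidal Hom-algebra `(MM, μ)` is a right `(A, α)`-Hom-comodule algebra via `ρ`. -/
def IsRightHomComoduleAlg (AB : HomBialg k A) (MM : HomAlg k M)
    (ρ : M →ₗ[k] M ⊗[k] A) : Prop :=
  IsRightHomComodule AB.toHomCoalg MM.str ρ ∧
  (∀ m n, ρ (MM.mul m n)
      = TensorProduct.map (TensorProduct.lift MM.mul) (TensorProduct.lift AB.mul)
          (TensorProduct.tensorTensorTensorComm k M A M A (ρ m ⊗ₜ[k] ρ n))) ∧
  ρ MM.one = MM.one ⊗ₜ[k] AB.one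

/-- A matched copair `(A, H)` of monoidal Hom-bialgebras:
`A` is a left `H`-Hom-comodule algebra via `ρA : A → H ⊗ A`, `H` is a right
`A`-Hom-comodule algebra via `ρH : H → H ⊗ A`, subject to conditions (4.1)–(4.5). -/
def IsMatchedCopair (AB : HomBialg k A) (HB : HomBialg k H)
    (ρA : A →ₗ[k] H ⊗[k] A) (ρH : H →ₗ[k] H ⊗[k] A) : Prop :=
  IsLeftHomComoduleAlg HB AB.toHomAlg ρA ∧
  IsRightHomComoduleAlg AB HB.toHomAlg ρH ∧
  -- (4.1)
  (∀ a, TensorProduct.rid k H (TensorProduct.map LinearMap.id AB.counit (ρA a))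
      = AB.counit a • HB.one) ∧
  -- (4.2)
  (∀ a, TensorProduct.map LinearMap.id AB.comul (ρA a)
      = TensorProduct.map
          (TensorProduct.lift HB.mul ∘ₗ TensorProduct.map LinearMap.id HB.str.toLinearMap)
          ((TensorProduct.map
              (TensorProduct.lift AB.mul ∘ₗ TensorProduct.map AB.str.symm.toLinearMap LinearMap.id)
              LinearMap.id) ∘ₗ (TensorProduct.assoc k A A A).symm.toLinearMap)
          (TensorProduct.tensorTensorTensorComm k H A H (A ⊗[k] A)
            (TensorProduct.map LinearMap.id (TensorProduct.assoc k H A A).toLinearMap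
              (TensorProduct.map LinearMap.id (TensorProduct.map ρH LinearMap.id)
                (TensorProduct.map ρA ρA (AB.comul a)))))) ∧
  -- (4.3)
  (∀ h, TensorProduct.lid k A (TensorProduct.map HB.counit LinearMap.id (ρH h))
      = HB.counit h • AB.one) ∧
  -- (4.4)
  (∀ h, TensorProduct.map HB.comul LinearMap.id (ρH h)
      = TensorProduct.map
          ((TensorProduct.map LinearMap.id
              (TensorProduct.lift HB.mul ∘ₗ TensorProduct.map LinearMap.id HB.str.symm.toLinearMap))
            ∘ₗ (TensorProduct.assoc k H H H).toLinearMap)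
          (TensorProduct.lift AB.mul ∘ₗ TensorProduct.map AB.str.toLinearMap LinearMap.id)
          (TensorProduct.tensorTensorTensorComm k (H ⊗[k] H) A H A
            (TensorProduct.map (TensorProduct.assoc k H H A).symm.toLinearMap LinearMap.id
              (TensorProduct.map (TensorProduct.map LinearMap.id ρA) LinearMap.id
                (TensorProduct.map ρH ρH (HB.comul h)))))) ∧
  -- (4.5)
  (∀ h a, TensorProduct.map (TensorProduct.lift HB.mul) (TensorProduct.lift AB.mul)
        (TensorProduct.tensorTensorTensorComm k H A H A (ρH h ⊗ₜ[k] ρA a))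
      = TensorProduct.map (TensorProduct.lift HB.mul) (TensorProduct.lift AB.mul)
          (TensorProduct.tensorTensorTensorComm k H A H A (ρA a ⊗ₜ[k] ρH h)))

/-- A coquasitriangular structure `ζ` (with convolution inverse `ζi`) on a monoidal
Hom-bialgebra `P`; conditions (5.1)–(5.4). -/
def IsCoquasitriangular (P : HomBialg k T) (ζ ζi : T →ₗ[k] T →ₗ[k] k) : Prop :=
  -- convolution invertibility
  (∀ h g, TensorProduct.lid k k
      (TensorProduct.map (TensorProduct.lift ζ) (TensorProduct.lift ζi)
        (TensorProduct.tensorTensorTensorComm k T T T T (P.comul h ⊗ₜ[k] P.comul g)))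
      = P.counit h * P.counit g) ∧
  (∀ h g, TensorProduct.lid k k
      (TensorProduct.map (TensorProduct.lift ζi) (TensorProduct.lift ζ)
        (TensorProduct.tensorTensorTensorComm k T T T T (P.comul h ⊗ₜ[k] P.comul g)))
      = P.counit h * P.counit g) ∧
  -- (5.1)
  (∀ h g, ζ (P.str h) (P.str g) = ζ h g) ∧
  -- (5.2)
  (∀ h g, TensorProduct.lid k T
      (TensorProduct.map (TensorProduct.lift ζ)
        (TensorProduct.lift P.mul ∘ₗ (TensorProduct.comm k T T).toLinearMap)
        (TensorProduct.tensorTensorTensorComm k T T T T (P.comul h ⊗ₜ[k] P.comul g)))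
      = TensorProduct.rid k T
          (TensorProduct.map (TensorProduct.lift P.mul) (TensorProduct.lift ζ)
            (TensorProduct.tensorTensorTensorComm k T T T T (P.comul h ⊗ₜ[k] P.comul g)))) ∧
  -- (5.3)
  (∀ h g c, ζ (P.str.symm h) (P.mul g c)
      = TensorProduct.lid k k
          (TensorProduct.map (ζ.flip (P.str g)) (ζ.flip (P.str c)) (P.comul h))) ∧
  -- (5.4)
  (∀ h g c, ζ (P.mul h g) (P.str.symm c)
      = TensorProduct.lid k k
          (TensorProduct.map (ζ (P.str h)) (ζ (P.str g))
            ((TensorProduct.comm k T T) (P.comul c))))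

/-- `σ` is a left monoidal Hom-2-cocycle on the monoidal Hom-bialgebra `P`. -/
def IsLeftHom2Cocycle (P : HomBialg k T) (σ : T →ₗ[k] T →ₗ[k] k) : Prop :=
  (∀ h g, σ (P.str h) (P.str g) = σ h g) ∧
  (∀ h g c, TensorProduct.lid k k
      (TensorProduct.map (TensorProduct.lift σ) (σ.flip c ∘ₗ TensorProduct.lift P.mul)
        (TensorProduct.tensorTensorTensorComm k T T T T (P.comul h ⊗ₜ[k] P.comul g)))
      = TensorProduct.lid k k
          (TensorProduct.map (TensorProduct.lift σ) (σ h ∘ₗ TensorProduct.lift P.mul)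
            (TensorProduct.tensorTensorTensorComm k T T T T (P.comul g ⊗ₜ[k] P.comul c))))

/-- `σ` is a right monoidal Hom-2-cocycle on the monoidal Hom-bialgebra `P`. -/
def IsRightHom2Cocycle (P : HomBialg k T) (σ : T →ₗ[k] T →ₗ[k] k) : Prop :=
  (∀ h g, σ (P.str h) (P.str g) = σ h g) ∧
  (∀ h g c, TensorProduct.lid k k
      (TensorProduct.map (σ.flip c ∘ₗ TensorProduct.lift P.mul) (TensorProduct.lift σ)
        (TensorProduct.tensorTensorTensorComm k T T T T (P.comul h ⊗ₜ[k] P.comul g)))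
      = TensorProduct.lid k k
          (TensorProduct.map (σ h ∘ₗ TensorProduct.lift P.mul) (TensorProduct.lift σ)
            (TensorProduct.tensorTensorTensorComm k T T T T (P.comul g ⊗ₜ[k] P.comul c))))

/-- Normality of a 2-cocycle: `σ(1, h) = σ(h, 1) = ε(h)`. -/
def IsNormal2Cocycle (P : HomBialg k T) (σ : T →ₗ[k] T →ₗ[k] k) : Prop :=
  (∀ h, σ P.one h = P.counit h) ∧ (∀ h, σ h P.one = P.counit h)

/-- The left-twisted product `h ·_σ g = σ(h₁, g₁) β(h₂ g₂)`. -/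
noncomputable def leftTwistMul (P : HomBialg k T) (σ : T →ₗ[k] T →ₗ[k] k) (h g : T) : T :=
  TensorProduct.lid k T
    (TensorProduct.map (TensorProduct.lift σ) (P.str.toLinearMap ∘ₗ TensorProduct.lift P.mul)
      (TensorProduct.tensorTensorTensorComm k T T T T (P.comul h ⊗ₜ[k] P.comul g)))

/-- The right-twisted product `h ·_σ g = β(h₁ g₁) σ(h₂, g₂)`. -/
noncomputable def rightTwistMul (P : HomBialg k T) (σ : T →ₗ[k] T →ₗ[k] k) (h g : T) : T :=
  TensorProduct.rid k T
    (TensorProduct.map (P.str.toLinearMap ∘ₗ TensorProduct.lift P.mul) (TensorProduct.lift σ)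
      (TensorProduct.tensorTensorTensorComm k T T T T (P.comul h ⊗ₜ[k] P.comul g)))

/-- The convolution product on the linear dual of a monoidal Hom-coalgebra:
`(u • v)(h) = u(h₁) v(h₂)`. -/
noncomputable def convD (CC : HomCoalg k H) (u v : Module.Dual k H) : Module.Dual k H :=
  (TensorProduct.lid k k).toLinearMap ∘ₗ TensorProduct.map u v ∘ₗ CC.comul

end HomDefs

/-!
Give `H ⊗ H` its tensor product Hom-coalgebra structure. Then `m : H ⊗ H → H` is a morphism of
Hom-coalgebras, and the left-twisted product is the convolution `m_σ = σ * (β ∘ m)`. Since `σ` is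
`β`-invariant, Hom-coassociativity of `H ⊗ H` alone gives `Δ ∘ m_σ = (m_σ ⊗ m) ∘ Δ_{H ⊗ H}`, the
multiplicativity of the coaction. The cocycle identity reads `σ(a ·_σ b, β c) = σ(β a, b ·_σ c)`,
and expanding `β a ·_σ (b ·_σ c)` with the multiplicativity of `Δ` turns it into Hom-associativity
of the twist. The right-handed statement is the left-handed one for the co-opposite bialgebra.
-/

section TensorIdentities

variable {R : Type*} [CommSemiring R] {A B C D A' B' C' D' : Type*}
  [AddCommMonoid A] [Module R A] [AddCommMonoid B] [Module R B]
  [AddCommMonoid C] [Module R C] [AddCommMonoid D] [Module R D]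
  [AddCommMonoid A'] [Module R A'] [AddCommMonoid B'] [Module R B']
  [AddCommMonoid C'] [Module R C'] [AddCommMonoid D'] [Module R D']

theorem tensorTensorTensorComm_map_tmul_map (f : A →ₗ[R] A') (g : B →ₗ[R] B')
    (f' : C →ₗ[R] C') (g' : D →ₗ[R] D') (x : A ⊗[R] B) (y : C ⊗[R] D) :
    tensorTensorTensorComm R A' B' C' D' (map f g x ⊗ₜ[R] map f' g' y)
      = map (map f f') (map g g') (tensorTensorTensorComm R A B C D (x ⊗ₜ[R] y)) :=
  LinearMap.congr_fun (TensorProduct.tensorTensorTensorComm_comp_map R f g f' g') (x ⊗ₜ[R] y)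

theorem tensorTensorTensorComm_comm_tmul_comm (x : A ⊗[R] B) (y : C ⊗[R] D) :
    tensorTensorTensorComm R B A D C
        (TensorProduct.comm R A B x ⊗ₜ[R] TensorProduct.comm R C D y)
      = TensorProduct.comm R (A ⊗[R] C) (B ⊗[R] D)
          (tensorTensorTensorComm R A B C D (x ⊗ₜ[R] y)) := by
  suffices h :
      (tensorTensorTensorComm R B A D C).toLinearMap
        ∘ₗ map (TensorProduct.comm R A B).toLinearMap (TensorProduct.comm R C D).toLinearMap
      = (TensorProduct.comm R (A ⊗[R] C) (B ⊗[R] D)).toLinearMap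
        ∘ₗ (tensorTensorTensorComm R A B C D).toLinearMap from
    LinearMap.congr_fun h (x ⊗ₜ[R] y)
  ext
  rfl

theorem assoc_map_tensorTensorTensorComm (x : (A ⊗[R] B) ⊗[R] C) (y : (A' ⊗[R] B') ⊗[R] C') :
    TensorProduct.assoc R (A ⊗[R] A') (B ⊗[R] B') (C ⊗[R] C')
        (map (tensorTensorTensorComm R A B A' B').toLinearMap LinearMap.id
          (tensorTensorTensorComm R (A ⊗[R] B) C (A' ⊗[R] B') C' (x ⊗ₜ[R] y)))
      = map LinearMap.id (tensorTensorTensorComm R B C B' C').toLinearMap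
          (tensorTensorTensorComm R A (B ⊗[R] C) A' (B' ⊗[R] C')
            (TensorProduct.assoc R A B C x ⊗ₜ[R] TensorProduct.assoc R A' B' C' y)) := by
  suffices h :
      (TensorProduct.assoc R (A ⊗[R] A') (B ⊗[R] B') (C ⊗[R] C')).toLinearMap
        ∘ₗ map (tensorTensorTensorComm R A B A' B').toLinearMap LinearMap.id
        ∘ₗ (tensorTensorTensorComm R (A ⊗[R] B) C (A' ⊗[R] B') C').toLinearMap
      = map LinearMap.id (tensorTensorTensorComm R B C B' C').toLinearMap
        ∘ₗ (tensorTensorTensorComm R A (B ⊗[R] C) A' (B' ⊗[R] C')).toLinearMap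
        ∘ₗ map (TensorProduct.assoc R A B C).toLinearMap
          (TensorProduct.assoc R A' B' C').toLinearMap from
    LinearMap.congr_fun h (x ⊗ₜ[R] y)
  ext
  rfl

theorem comm_map_comm_left (x : (A ⊗[R] B) ⊗[R] C) :
    TensorProduct.comm R (B ⊗[R] A) C
        (map (TensorProduct.comm R A B).toLinearMap LinearMap.id x)
      = TensorProduct.assoc R C B A
          (TensorProduct.comm R A (C ⊗[R] B)
            (map LinearMap.id (TensorProduct.comm R B C).toLinearMap
              (TensorProduct.assoc R A B C x))) := by
  suffices h :
      (TensorProduct.comm R (B ⊗[R] A) C).toLinearMap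
        ∘ₗ map (TensorProduct.comm R A B).toLinearMap LinearMap.id
      = (TensorProduct.assoc R C B A).toLinearMap
        ∘ₗ (TensorProduct.comm R A (C ⊗[R] B)).toLinearMap
        ∘ₗ map LinearMap.id (TensorProduct.comm R B C).toLinearMap
        ∘ₗ (TensorProduct.assoc R A B C).toLinearMap from
    LinearMap.congr_fun h x
  ext
  rfl

theorem lid_map_map_assoc (s : A →ₗ[R] R) (f : B →ₗ[R] B') (g : C →ₗ[R] C')
    (x : (A ⊗[R] B) ⊗[R] C) :
    TensorProduct.lid R (B' ⊗[R] C') (map s (map f g) (TensorProduct.assoc R A B C x))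
      = map ((TensorProduct.lid R B').toLinearMap ∘ₗ map s f) g x := by
  suffices h :
      (TensorProduct.lid R (B' ⊗[R] C')).toLinearMap ∘ₗ map s (map f g)
        ∘ₗ (TensorProduct.assoc R A B C).toLinearMap
      = map ((TensorProduct.lid R B').toLinearMap ∘ₗ map s f) g from
    LinearMap.congr_fun h x
  ext
  simp [TensorProduct.smul_tmul']

theorem lid_map_lid_tensorTensorTensorComm (x : R ⊗[R] A) (y : R ⊗[R] B) :
    TensorProduct.lid R (A ⊗[R] B)
        (map (TensorProduct.lid R R).toLinearMap LinearMap.id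
          (tensorTensorTensorComm R R A R B (x ⊗ₜ[R] y)))
      = TensorProduct.lid R A x ⊗ₜ[R] TensorProduct.lid R B y := by
  suffices h :
      (TensorProduct.lid R (A ⊗[R] B)).toLinearMap
        ∘ₗ map (TensorProduct.lid R R).toLinearMap LinearMap.id
        ∘ₗ (tensorTensorTensorComm R R A R B).toLinearMap
      = map (TensorProduct.lid R A).toLinearMap (TensorProduct.lid R B).toLinearMap from
    LinearMap.congr_fun h (x ⊗ₜ[R] y)
  ext
  simp

theorem rid_map_lid_tensorTensorTensorComm (x : A ⊗[R] R) (y : B ⊗[R] R) :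
    TensorProduct.rid R (A ⊗[R] B)
        (map LinearMap.id (TensorProduct.lid R R).toLinearMap
          (tensorTensorTensorComm R A R B R (x ⊗ₜ[R] y)))
      = TensorProduct.rid R A x ⊗ₜ[R] TensorProduct.rid R B y := by
  suffices h :
      (TensorProduct.rid R (A ⊗[R] B)).toLinearMap
        ∘ₗ map LinearMap.id (TensorProduct.lid R R).toLinearMap
        ∘ₗ (tensorTensorTensorComm R A R B R).toLinearMap
      = map (TensorProduct.rid R A).toLinearMap (TensorProduct.rid R B).toLinearMap from
    LinearMap.congr_fun h (x ⊗ₜ[R] y)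
  ext
  simp

end TensorIdentities

namespace HomCoalg

variable {k : Type*} [Field k] {A B N L : Type*}
  [AddCommGroup A] [Module k A] [AddCommGroup B] [Module k B]
  [AddCommGroup N] [Module k N] [AddCommGroup L] [Module k L]

/-- The convolution `(s * f)(a) = s(a₁) f(a₂)` of a functional with a linear map out of a
Hom-coalgebra. The left twist of a product `m` by `σ` is `σ * (β ∘ m)`. -/
noncomputable def leftConv (C : HomCoalg k A) (s : A →ₗ[k] k) (f : A →ₗ[k] N) : A →ₗ[k] N :=
  (TensorProduct.lid k N).toLinearMap ∘ₗ map s f ∘ₗ C.comul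

theorem comp_leftConv (C : HomCoalg k A) (g : N →ₗ[k] L) (s : A →ₗ[k] k) (f : A →ₗ[k] N) :
    g ∘ₗ C.leftConv s f = C.leftConv s (g ∘ₗ f) := by
  have h : g ∘ₗ (TensorProduct.lid k N).toLinearMap ∘ₗ map s f
      = (TensorProduct.lid k L).toLinearMap ∘ₗ map s (g ∘ₗ f) := by
    ext; simp
  exact congrArg (· ∘ₗ C.comul) h

theorem leftConv_str (C : HomCoalg k A) {s : A →ₗ[k] k} (hs : s ∘ₗ C.str.toLinearMap = s)
    (f : A →ₗ[k] N) (a : A) :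
    C.leftConv s f (C.str a) = C.leftConv s (f ∘ₗ C.str.toLinearMap) a := by
  simp only [leftConv, LinearMap.comp_apply, C.comul_str, map_map, hs]

theorem leftConv_map_comp_comul (C : HomCoalg k A) {s : A →ₗ[k] k}
    (hs : s ∘ₗ C.str.toLinearMap = s) (f : A →ₗ[k] N) (g : A →ₗ[k] L) (a : A) :
    C.leftConv s (map f g ∘ₗ C.comul) a
      = map (C.leftConv s f) (g ∘ₗ C.str.symm.toLinearMap) (C.comul a) := by
  have hs_symm : s ∘ₗ C.str.symm.toLinearMap = s := by
    nth_rw 1 [← hs]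
    ext x
    simp
  calc C.leftConv s (map f g ∘ₗ C.comul) a
    _ = TensorProduct.lid k _ (map s (map f g)
          (map C.str.symm.toLinearMap C.comul (C.comul a))) := by
        rw [map_map, hs_symm]
        rfl
    _ = map ((TensorProduct.lid k N).toLinearMap ∘ₗ map s f) g
          (map C.comul C.str.symm.toLinearMap (C.comul a)) := by
        rw [C.hom_coassoc, lid_map_map_assoc]
    _ = map (C.leftConv s f) (g ∘ₗ C.str.symm.toLinearMap) (C.comul a) := by
        rw [map_map]
        rfl

theorem comul_leftConv (C : HomCoalg k A) (D : HomCoalg k B) {s : A →ₗ[k] k}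
    (hs : s ∘ₗ C.str.toLinearMap = s) {f : A →ₗ[k] B}
    (hf_str : f ∘ₗ C.str.toLinearMap = D.str.toLinearMap ∘ₗ f)
    (hf_comul : D.comul ∘ₗ f = map f f ∘ₗ C.comul) (a : A) :
    D.comul (C.leftConv s (D.str.toLinearMap ∘ₗ f) a)
      = map (C.leftConv s (D.str.toLinearMap ∘ₗ f)) f (C.comul a) := by
  have hcomul : D.comul ∘ₗ D.str.toLinearMap ∘ₗ f
      = map (D.str.toLinearMap ∘ₗ f) (D.str.toLinearMap ∘ₗ f) ∘ₗ C.comul := by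
    ext x
    have := LinearMap.congr_fun hf_comul x
    simp only [LinearMap.comp_apply, LinearEquiv.coe_coe] at this ⊢
    rw [D.comul_str, this, map_map]
  have hstr : (D.str.toLinearMap ∘ₗ f) ∘ₗ C.str.symm.toLinearMap = f := by
    rw [← hf_str]
    ext x
    simp
  rw [← LinearMap.comp_apply, comp_leftConv, hcomul, leftConv_map_comp_comul C hs, hstr]

/-- The tensor product Hom-coalgebra, with `Δ(a ⊗ b) = (a₁ ⊗ b₁) ⊗ (a₂ ⊗ b₂)`. It makes the
multiplication `H ⊗ H → H` of a Hom-bialgebra a morphism of Hom-coalgebras. -/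
noncomputable def tensor (C : HomCoalg k A) (D : HomCoalg k B) : HomCoalg k (A ⊗[k] B) where
  comul := (tensorTensorTensorComm k A A B B).toLinearMap ∘ₗ map C.comul D.comul
  counit := (TensorProduct.lid k k).toLinearMap ∘ₗ map C.counit D.counit
  str := TensorProduct.congr C.str D.str
  hom_coassoc t := by
    induction t with
    | zero => simp
    | add x y hx hy => simp only [map_add, hx, hy]
    | tmul a b =>
      have h := assoc_map_tensorTensorTensorComm
        (map C.comul C.str.symm.toLinearMap (C.comul a))
        (map D.comul D.str.symm.toLinearMap (D.comul b))
      rw [← C.hom_coassoc, ← D.hom_coassoc] at h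
      simp only [tensorTensorTensorComm_map_tmul_map, map_map] at h
      exact h.symm
  counit_comul_right t := by
    induction t with
    | zero => simp
    | add x y hx hy => simp only [map_add, hx, hy]
    | tmul a b =>
      have h := rid_map_lid_tensorTensorTensorComm
        (map LinearMap.id C.counit (C.comul a)) (map LinearMap.id D.counit (D.comul b))
      simp only [tensorTensorTensorComm_map_tmul_map, map_map, C.counit_comul_right,
        D.counit_comul_right, map_id] at h
      exact h
  counit_comul_left t := by
    induction t with
    | zero => simp
    | add x y hx hy => simp only [map_add, hx, hy]
    | tmul a b =>
      have h := lid_map_lid_tensorTensorTensorComm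
        (map C.counit LinearMap.id (C.comul a)) (map D.counit LinearMap.id (D.comul b))
      simp only [tensorTensorTensorComm_map_tmul_map, map_map, C.counit_comul_left,
        D.counit_comul_left, map_id] at h
      exact h
  comul_str t := by
    induction t with
    | zero => simp
    | add x y hx hy => simp only [map_add, hx, hy]
    | tmul a b =>
      simp only [TensorProduct.congr_tmul, LinearMap.comp_apply, map_tmul, C.comul_str,
        D.comul_str, LinearEquiv.coe_coe]
      exact tensorTensorTensorComm_map_tmul_map _ _ _ _ _ _
  counit_str t := by
    induction t with
    | zero => simp
    | add x y hx hy => simp only [map_add, hx, hy]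
    | tmul a b => simp [C.counit_str, D.counit_str]

/-- The co-opposite Hom-coalgebra, with `Δ(a) = a₂ ⊗ a₁`. -/
noncomputable def cop (C : HomCoalg k A) : HomCoalg k A where
  comul := (TensorProduct.comm k A A).toLinearMap ∘ₗ C.comul
  counit := C.counit
  str := C.str
  hom_coassoc a := by
    have h := comm_map_comm_left (map C.comul C.str.symm.toLinearMap (C.comul a))
    rw [← C.hom_coassoc] at h
    simp only [map_map] at h
    simpa [map_comm] using h
  counit_comul_right a := by simpa [map_comm] using C.counit_comul_left a
  counit_comul_left a := by simpa [map_comm] using C.counit_comul_right a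
  comul_str a := by simp [C.comul_str, map_comm]
  counit_str := C.counit_str

end HomCoalg

section Comodule

variable {k : Type*} [Field k] {A : Type*} [AddCommGroup A] [Module k A]

theorem isRightHomComodule_comul (C : HomCoalg k A) : IsRightHomComodule C C.str C.comul :=
  ⟨C.hom_coassoc, C.comul_str, C.counit_comul_right⟩

theorem isLeftHomComodule_comul (C : HomCoalg k A) : IsLeftHomComodule C C.str C.comul :=
  ⟨C.hom_coassoc, C.comul_str, C.counit_comul_left⟩

end Comodule

namespace HomBialg

variable {k : Type*} [Field k] {H : Type*} [AddCommGroup H] [Module k H]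

theorem lift_mul_comp_tensor_str (P : HomBialg k H) :
    lift P.mul ∘ₗ (P.tensor P.toHomCoalg).str.toLinearMap = P.str.toLinearMap ∘ₗ lift P.mul :=
  TensorProduct.ext' fun a b => (P.str_mul a b).symm

theorem comul_comp_lift_mul (P : HomBialg k H) :
    P.comul ∘ₗ lift P.mul
      = map (lift P.mul) (lift P.mul) ∘ₗ (P.tensor P.toHomCoalg).comul :=
  TensorProduct.ext' fun a b => P.comul_mul a b

/-- The left-twisted product of `leftTwistMul`, as a linear map on `H ⊗ H`. -/
noncomputable def leftTwistLin (P : HomBialg k H) (σ : H →ₗ[k] H →ₗ[k] k) : H ⊗[k] H →ₗ[k] H :=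
  (P.tensor P.toHomCoalg).leftConv (lift σ) (P.str.toLinearMap ∘ₗ lift P.mul)

variable {P : HomBialg k H} {σ : H →ₗ[k] H →ₗ[k] k}

theorem lift_comp_tensor_str (hσ : ∀ h g, σ (P.str h) (P.str g) = σ h g) :
    lift σ ∘ₗ (P.tensor P.toHomCoalg).str.toLinearMap = lift σ :=
  TensorProduct.ext' hσ

theorem comul_leftTwistLin (hσ : ∀ h g, σ (P.str h) (P.str g) = σ h g) (a b : H) :
    P.comul (P.leftTwistLin σ (a ⊗ₜ[k] b))
      = map (P.leftTwistLin σ) (lift P.mul)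
          (tensorTensorTensorComm k H H H H (P.comul a ⊗ₜ[k] P.comul b)) :=
  HomCoalg.comul_leftConv _ P.toHomCoalg (lift_comp_tensor_str hσ) P.lift_mul_comp_tensor_str
    P.comul_comp_lift_mul _

theorem str_leftTwistLin (hσ : ∀ h g, σ (P.str h) (P.str g) = σ h g) (a b : H) :
    P.str (P.leftTwistLin σ (a ⊗ₜ[k] b)) = P.leftTwistLin σ (P.str a ⊗ₜ[k] P.str b) := by
  have h := (P.tensor P.toHomCoalg).leftConv_str (lift_comp_tensor_str hσ)
    (P.str.toLinearMap ∘ₗ lift P.mul) (a ⊗ₜ[k] b)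
  rw [LinearMap.comp_assoc, lift_mul_comp_tensor_str] at h
  exact (LinearMap.congr_fun (HomCoalg.comp_leftConv ..) _).trans h.symm

theorem leftTwistLin_tmul_one (hσ : ∀ h, σ h P.one = P.counit h) (a : H) :
    P.leftTwistLin σ (a ⊗ₜ[k] P.one) = P.str a := by
  have h : ∀ u : H ⊗[k] H, TensorProduct.lid k H
      (map (lift σ) (P.str.toLinearMap ∘ₗ lift P.mul)
        (tensorTensorTensorComm k H H H H (u ⊗ₜ[k] (P.one ⊗ₜ[k] P.one))))
      = P.str (P.str (TensorProduct.lid k H (map P.counit LinearMap.id u))) := fun u => by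
    induction u with
    | zero => simp
    | add x y hx hy => simp only [map_add, add_tmul, hx, hy]
    | tmul x y => simp [hσ, P.mul_one]
  calc P.leftTwistLin σ (a ⊗ₜ[k] P.one)
    _ = P.str (P.str (TensorProduct.lid k H (map P.counit LinearMap.id (P.comul a)))) := by
        rw [← h, ← P.comul_one]
        rfl
    _ = P.str a := by rw [P.counit_comul_left, LinearEquiv.apply_symm_apply]

theorem leftTwistLin_one_tmul (hσ : ∀ h, σ P.one h = P.counit h) (a : H) :
    P.leftTwistLin σ (P.one ⊗ₜ[k] a) = P.str a := by
  have h : ∀ u : H ⊗[k] H, TensorProduct.lid k H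
      (map (lift σ) (P.str.toLinearMap ∘ₗ lift P.mul)
        (tensorTensorTensorComm k H H H H ((P.one ⊗ₜ[k] P.one) ⊗ₜ[k] u)))
      = P.str (P.str (TensorProduct.lid k H (map P.counit LinearMap.id u))) := fun u => by
    induction u with
    | zero => simp
    | add x y hx hy => simp only [map_add, tmul_add, hx, hy]
    | tmul x y => simp [hσ, P.one_mul]
  calc P.leftTwistLin σ (P.one ⊗ₜ[k] a)
    _ = P.str (P.str (TensorProduct.lid k H (map P.counit LinearMap.id (P.comul a)))) := by
        rw [← h, ← P.comul_one]
        rfl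
    _ = P.str a := by rw [P.counit_comul_left, LinearEquiv.apply_symm_apply]

end HomBialg

namespace IsLeftHom2Cocycle

variable {k : Type*} [Field k] {H : Type*} [AddCommGroup H] [Module k H]
  {P : HomBialg k H} {σ : H →ₗ[k] H →ₗ[k] k}

/-- The cocycle identity, rewritten as a balancing property of `σ` over the twisted product. -/
theorem apply_leftTwistLin_str (hσ : IsLeftHom2Cocycle P σ) (a b c : H) :
    σ (P.leftTwistLin σ (a ⊗ₜ[k] b)) (P.str c) = σ (P.str a) (P.leftTwistLin σ (b ⊗ₜ[k] c)) := by
  have hleft : σ.flip (P.str c) ∘ₗ P.str.toLinearMap = σ.flip c := LinearMap.ext fun x => hσ.1 x c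
  have hright : σ (P.str a) ∘ₗ P.str.toLinearMap = σ a := LinearMap.ext (hσ.1 a)
  calc σ (P.leftTwistLin σ (a ⊗ₜ[k] b)) (P.str c)
    _ = (P.tensor P.toHomCoalg).leftConv (lift σ) (σ.flip c ∘ₗ lift P.mul) (a ⊗ₜ[k] b) := by
        rw [← hleft, LinearMap.comp_assoc, ← HomCoalg.comp_leftConv]
        rfl
    _ = (P.tensor P.toHomCoalg).leftConv (lift σ) (σ a ∘ₗ lift P.mul) (b ⊗ₜ[k] c) := hσ.2 a b c
    _ = σ (P.str a) (P.leftTwistLin σ (b ⊗ₜ[k] c)) := by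
        rw [← hright, LinearMap.comp_assoc, ← HomCoalg.comp_leftConv]
        rfl

theorem leftTwistLin_assoc (hσ : IsLeftHom2Cocycle P σ) (a b c : H) :
    P.leftTwistLin σ (P.str a ⊗ₜ[k] P.leftTwistLin σ (b ⊗ₜ[k] c))
      = P.leftTwistLin σ (P.leftTwistLin σ (a ⊗ₜ[k] b) ⊗ₜ[k] P.str c) := by
  have h : ∀ u v w : H ⊗[k] H,
      TensorProduct.lid k H (map (lift σ) (P.str.toLinearMap ∘ₗ lift P.mul)
        (tensorTensorTensorComm k H H H H (map P.str.toLinearMap P.str.toLinearMap u ⊗ₜ[k]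
          map (P.leftTwistLin σ) (lift P.mul) (tensorTensorTensorComm k H H H H (v ⊗ₜ[k] w)))))
      = TensorProduct.lid k H (map (lift σ) (P.str.toLinearMap ∘ₗ lift P.mul)
        (tensorTensorTensorComm k H H H H
          (map (P.leftTwistLin σ) (lift P.mul) (tensorTensorTensorComm k H H H H (u ⊗ₜ[k] v))
            ⊗ₜ[k] map P.str.toLinearMap P.str.toLinearMap w))) := fun u v w => by
    induction u with
    | zero => simp
    | add x y hx hy => simp only [map_add, add_tmul, hx, hy]
    | tmul a₁ a₂ =>
    induction v with
    | zero => simp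
    | add x y hx hy => simp only [map_add, add_tmul, tmul_add, hx, hy]
    | tmul b₁ b₂ =>
    induction w with
    | zero => simp
    | add x y hx hy => simp only [map_add, tmul_add, hx, hy]
    | tmul c₁ c₂ => simp [hσ.apply_leftTwistLin_str, P.hom_assoc]
  have h := h (P.comul a) (P.comul b) (P.comul c)
  simp only [← HomBialg.comul_leftTwistLin hσ.1, ← P.comul_str] at h
  exact h

end IsLeftHom2Cocycle

section Twists

variable {k : Type*} [Field k] {H : Type*} [AddCommGroup H] [Module k H]
  {P : HomBialg k H} {σ : H →ₗ[k] H →ₗ[k] k}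

/-- The left twist `_σH` of a Hom-bialgebra by a normal left Hom-2-cocycle. -/
noncomputable def HomBialg.leftTwist (P : HomBialg k H) (hσ : IsLeftHom2Cocycle P σ)
    (hn : IsNormal2Cocycle P σ) : HomAlg k H where
  mul := TensorProduct.curry (P.leftTwistLin σ)
  one := P.one
  str := P.str
  hom_assoc := hσ.leftTwistLin_assoc
  mul_one := leftTwistLin_tmul_one hn.2
  one_mul := leftTwistLin_one_tmul hn.1
  str_mul := str_leftTwistLin hσ.1
  str_one := P.str_one

theorem isRightHomComoduleAlg_leftTwist (hσ : IsLeftHom2Cocycle P σ)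
    (hn : IsNormal2Cocycle P σ) : IsRightHomComoduleAlg P (P.leftTwist hσ hn) P.comul := by
  refine ⟨isRightHomComodule_comul P.toHomCoalg, fun a b => ?_, P.comul_one⟩
  have hmul : lift (P.leftTwist hσ hn).mul = P.leftTwistLin σ := TensorProduct.ext' fun _ _ => rfl
  rw [hmul]
  exact HomBialg.comul_leftTwistLin hσ.1 a b

/-- The co-opposite Hom-bialgebra: same product, opposite coproduct. It exchanges left and right
2-cocycles, twists and comodule algebras. -/
noncomputable def HomBialg.cop (P : HomBialg k H) : HomBialg k H where
  __ := P.toHomAlg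
  __ := P.toHomCoalg.cop
  comul_mul a b := by
    simp only [HomCoalg.cop, LinearMap.comp_apply, LinearEquiv.coe_coe, P.comul_mul,
      tensorTensorTensorComm_comm_tmul_comm, map_comm]
  comul_one := by simp [HomCoalg.cop, P.comul_one]
  counit_mul := P.counit_mul
  counit_one := P.counit_one

theorem rightTwistMul_eq_leftTwistMul_cop (P : HomBialg k H) (σ : H →ₗ[k] H →ₗ[k] k) (a b : H) :
    rightTwistMul P σ a b = leftTwistMul P.cop σ a b := by
  simp [leftTwistMul, rightTwistMul, HomBialg.cop, HomCoalg.cop,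
    tensorTensorTensorComm_comm_tmul_comm, map_comm]

theorem IsRightHom2Cocycle.cop (hσ : IsRightHom2Cocycle P σ) : IsLeftHom2Cocycle P.cop σ := by
  refine ⟨hσ.1, fun a b c => ?_⟩
  have h := hσ.2 a b c
  rw [TensorProduct.lid_eq_rid] at h
  simpa [HomBialg.cop, HomCoalg.cop, tensorTensorTensorComm_comm_tmul_comm, map_comm] using h

/-- The right twist `H_σ` of a Hom-bialgebra by a normal right Hom-2-cocycle, obtained as the left
twist of the co-opposite Hom-bialgebra. -/
noncomputable def HomBialg.rightTwist (P : HomBialg k H) (hσ : IsRightHom2Cocycle P σ)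
    (hn : IsNormal2Cocycle P σ) : HomAlg k H :=
  P.cop.leftTwist hσ.cop hn

theorem isLeftHomComoduleAlg_rightTwist (hσ : IsRightHom2Cocycle P σ)
    (hn : IsNormal2Cocycle P σ) : IsLeftHomComoduleAlg P (P.rightTwist hσ hn) P.comul := by
  refine ⟨isLeftHomComodule_comul P.toHomCoalg, fun a b => ?_, P.comul_one⟩
  have h := (isRightHomComoduleAlg_leftTwist hσ.cop hn).2.1 a b
  apply (TensorProduct.comm k H H).injective
  rw [← map_comm, ← tensorTensorTensorComm_comm_tmul_comm]
  exact h

end Twists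

theorem twist_comul_comodule_algebra_general
    {k : Type*} [Field k] {H : Type*} [AddCommGroup H] [Module k H]
    (P : HomBialg k H) (σ : H →ₗ[k] H →ₗ[k] k) :
    (IsLeftHom2Cocycle P σ ∧ IsNormal2Cocycle P σ →
      ∃ Q : HomAlg k H,
        Q.one = P.one ∧ Q.str = P.str ∧
        (∀ h g, Q.mul h g = leftTwistMul P σ h g) ∧
        IsRightHomComoduleAlg P Q P.comul) ∧
    (IsRightHom2Cocycle P σ ∧ IsNormal2Cocycle P σ →
      ∃ Q : HomAlg k H,
        Q.one = P.one ∧ Q.str = P.str ∧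
        (∀ h g, Q.mul h g = rightTwistMul P σ h g) ∧
        IsLeftHomComoduleAlg P Q P.comul) :=
  ⟨fun ⟨hσ, hn⟩ => ⟨P.leftTwist hσ hn, rfl, rfl, fun _ _ => rfl,
      isRightHomComoduleAlg_leftTwist hσ hn⟩,
    fun ⟨hσ, hn⟩ => ⟨P.rightTwist hσ hn, rfl, rfl,
      fun h g => (rightTwistMul_eq_leftTwistMul_cop P σ h g).symm,
      isLeftHomComoduleAlg_rightTwist hσ hn⟩⟩

/-- Let `(H, β)` be a monoidal Hom-Hopf algebra.
(1) If `σ` is a normal left monoidal Hom-2-cocycle, the comultiplication `Δ` of `H`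
is an algebra homomorphism from the left twist `_σH` to `_σH ⊗ H`, making `_σH` a
right `(H, β)`-Hom-comodule algebra.
(2) If `σ` is a normal right monoidal Hom-2-cocycle, `Δ` is an algebra homomorphism
from the right twist `H_σ` to `H ⊗ H_σ`, making `H_σ` a left `(H, β)`-Hom-comodule
algebra. -/
theorem twist_comul_comodule_algebra
    {k : Type*} [Field k] {H : Type*} [AddCommGroup H] [Module k H]
    (P : HomHopf k H) (σ : H →ₗ[k] H →ₗ[k] k) :
    (IsLeftHom2Cocycle P.toHomBialg σ ∧ IsNormal2Cocycle P.toHomBialg σ →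
      ∃ Q : HomAlg k H,
        Q.one = P.one ∧ Q.str = P.str ∧
        (∀ h g, Q.mul h g = leftTwistMul P.toHomBialg σ h g) ∧
        IsRightHomComoduleAlg P.toHomBialg Q P.comul) ∧
    (IsRightHom2Cocycle P.toHomBialg σ ∧ IsNormal2Cocycle P.toHomBialg σ →
      ∃ Q : HomAlg k H,
        Q.one = P.one ∧ Q.str = P.str ∧
        (∀ h g, Q.mul h g = rightTwistMul P.toHomBialg σ h g) ∧
        IsLeftHomComoduleAlg P.toHomBialg Q P.comul) := by
  exact twist_comul_comodule_algebra_general P.toHomBialg σ
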